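/- arXiv:1701.06145 — 2 statements merged into one kernel-verified Lean document; each statement's English description precedes it below -/
import Mathlib

section
/- Let T > 0 and let q : ℝ → ℝ be a T-periodic locally integrable function satisfying (q#) and (q*) with positivity intervals I⁺_1, …, I⁺_m. Let g ∈ C¹([0,∞)) satisfy (g*) and (gs). Then there exists R > 0 such that for every ν ≥ 0 and every integer k ≥ 1, every nonnegative kT-periodic solution u of u'' + q(t) g(u) + ν·𝟙(t) = 0, where 𝟙 is the T-periodic extension of the indicator function of the union of the intervals I⁺_1 ∪ … ∪ I⁺_m, satisfies max over ℝ of u(t) < R. -/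
/-!
On a positivity interval `[a, b]` a nonnegative solution is concave. If `M` is its maximum there,
then concavity gives `u ≥ Mδ/(b - a)` on `[a + δ, b - δ]`, while `u'` drops by at most `2M/δ` across
this subinterval. Integrating the equation, `∫ q g(u) ≤ 2M/δ`; for large `M` the superlinear growth
of `g` makes the left-hand side a large multiple of `M`, a contradiction. On a negativity interval
the solution is convex, hence below its endpoint values, which lie in positivity intervals. The
bound depends only on `q` and `g`, so it applies to all translates of `u` by multiples of `T`.
-/

open MeasureTheory Set Filter

/-- `u` is a solution of `u'' + F(t,u) = 0`: `u` is of class `C¹` and its derivative `u'`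
is locally absolutely continuous (it is the integral of a locally integrable function),
with `u'' + F(t, u(t)) = 0` for a.e. `t`. -/
def IsSol (F : ℝ → ℝ → ℝ) (u : ℝ → ℝ) : Prop :=
  ∃ u' : ℝ → ℝ,
    (∀ t, HasDerivAt u (u' t) t) ∧
    MeasureTheory.LocallyIntegrable (fun s => F s (u s)) MeasureTheory.volume ∧
    ∀ t, u' t = u' 0 - ∫ s in (0:ℝ)..t, F s (u s)

/-- `q ≻ 0` on `I` : `q ≥ 0` a.e. on `I` and `q ≢ 0` on `I`. -/
def PosOn (q : ℝ → ℝ) (I : Set ℝ) : Prop :=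
  (∀ᵐ t ∂(MeasureTheory.volume.restrict I), 0 ≤ q t) ∧
  ¬ (∀ᵐ t ∂(MeasureTheory.volume.restrict I), q t = 0)

/-- Condition `(q*)`: `[0,T]` splits into `m` closed intervals where `q ≻ 0`
separated by `m` closed intervals where `q ≺ 0`. -/
def SignCond (q : ℝ → ℝ) (T : ℝ) (m : ℕ) : Prop :=
  ∃ σ : ℕ → ℝ, σ 0 = 0 ∧ σ (2*m) = T ∧ (∀ i < 2*m, σ i < σ (i+1)) ∧
    (∀ i < m, PosOn q (Set.Icc (σ (2*i)) (σ (2*i+1)))) ∧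
    (∀ i < m, PosOn (fun t => - q t) (Set.Icc (σ (2*i+1)) (σ (2*i+2))))

/-- A subharmonic solution of order `k`: `kT`-periodic but not `ℓT`-periodic
for `ℓ = 1, …, k-1`. -/
def IsSubharmonic (u : ℝ → ℝ) (T : ℝ) (k : ℕ) : Prop :=
  Function.Periodic u (k * T) ∧ ∀ ℓ : ℕ, 1 ≤ ℓ → ℓ < k → ¬ Function.Periodic u (ℓ * T)

/-- `u` and `v` belong to the same periodicity class. -/
def SameClass (u v : ℝ → ℝ) (T : ℝ) : Prop :=
  ∃ ℓ : ℤ, ∀ t, v t = u (t + ℓ * T)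

open scoped Topology

theorem intervalIntegrable_of_locallyIntegrable {E : Type*} [NormedAddCommGroup E] {μ : Measure ℝ}
    {f : ℝ → E} (hf : LocallyIntegrable f μ) (a b : ℝ) : IntervalIntegrable f μ a b :=
  (hf.integrableOn_isCompact isCompact_uIcc).intervalIntegrable

namespace PosOn

variable {q : ℝ → ℝ} {a b : ℝ}

theorem intervalIntegral_pos (hpos : PosOn q (Icc a b)) (hq : LocallyIntegrable q volume)
    (hab : a ≤ b) : 0 < ∫ t in a..b, q t := by
  rw [intervalIntegral.integral_of_le hab, ← integral_Icc_eq_integral_Ioc]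
  refine (integral_nonneg_of_ae hpos.1).lt_of_ne' fun hzero => hpos.2 ?_
  exact (integral_eq_zero_iff_of_nonneg_ae hpos.1
    (hq.integrableOn_isCompact isCompact_Icc)).1 hzero

theorem exists_intervalIntegral_shrink_pos (hpos : PosOn q (Icc a b))
    (hq : LocallyIntegrable q volume) (hab : a < b) :
    ∃ δ > 0, a + δ < b - δ ∧ 0 < ∫ t in (a + δ)..(b - δ), q t := by
  have hq_int := intervalIntegrable_of_locallyIntegrable hq
  have hprim : Continuous fun x => ∫ t in a..x, q t :=
    intervalIntegral.continuous_primitive hq_int a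
  have hcont : Continuous fun δ => ∫ t in (a + δ)..(b - δ), q t := by
    simp_rw [← fun δ => intervalIntegral.integral_interval_sub_left (hq_int a (b - δ))
      (hq_int a (a + δ))]
    fun_prop
  have hintegral_pos : ∀ᶠ δ in 𝓝 0, 0 < ∫ t in (a + δ)..(b - δ), q t :=
    hcont.continuousAt.eventually_const_lt (by simpa using hpos.intervalIntegral_pos hq hab.le)
  have hlt : ∀ᶠ δ in 𝓝 0, a + δ < b - δ :=
    ContinuousAt.eventually_lt (by fun_prop) (by fun_prop) (by simpa using hab)
  exact ((eventually_mem_nhdsWithin (s := Ioi 0)).and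
    ((hlt.and hintegral_pos).filter_mono nhdsWithin_le_nhds)).exists

end PosOn

theorem exists_pos_forall_mul_le_of_tendsto_div {g : ℝ → ℝ}
    (hg : Tendsto (fun s => g s / s) atTop atTop) (K : ℝ) : ∃ N > 0, ∀ s ≥ N, K * s ≤ g s := by
  obtain ⟨N, hN⟩ := eventually_atTop.1 (hg.eventually_ge_atTop K)
  refine ⟨max N 1, by positivity, fun s hs => ?_⟩
  have hs_pos : 0 < s := one_pos.trans_le ((le_max_right N 1).trans hs)
  exact (le_div_iff₀ hs_pos).1 (hN s ((le_max_left N 1).trans hs))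

theorem concaveOn_mul_le_of_mem_segment {E : Type*} [AddCommGroup E] [Module ℝ E] {s : Set E}
    {f : E → ℝ} (hf : ConcaveOn ℝ s f) {e p x : E} (he : e ∈ s) (hp : p ∈ s) (hfe : 0 ≤ f e)
    (hfp : 0 ≤ f p) {θ : ℝ} (hθ : θ ∈ Icc 0 1) (hx : x ∈ segment ℝ ((1 - θ) • e + θ • p) p) :
    θ * f p ≤ f x := by
  have hz : θ * f p ≤ f ((1 - θ) • e + θ • p) := calc
    θ * f p ≤ (1 - θ) • f e + θ • f p :=
      le_add_of_nonneg_left (mul_nonneg (sub_nonneg.2 hθ.2) hfe)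
    _ ≤ f ((1 - θ) • e + θ • p) := hf.2 he hp (sub_nonneg.2 hθ.2) hθ.1 (sub_add_cancel 1 θ)
  have hzs : (1 - θ) • e + θ • p ∈ s :=
    hf.1 he hp (sub_nonneg.2 hθ.2) hθ.1 (sub_add_cancel 1 θ)
  exact (le_min hz (mul_le_of_le_one_left hfp hθ.2)).trans (hf.ge_on_segment hzs hp hx)

section ConcaveOnIcc

variable {f : ℝ → ℝ} {a b δ : ℝ}

theorem concaveOn_Icc_mul_le (hf : ConcaveOn ℝ (Icc a b) f) (hnonneg : ∀ t ∈ Icc a b, 0 ≤ f t)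
    (hδ : 0 < δ) {p x : ℝ} (hp : p ∈ Icc a b) (hx : x ∈ Icc (a + δ) (b - δ)) :
    δ / (b - a) * f p ≤ f x := by
  have hδab : δ ≤ b - a := by linarith [hx.1, hx.2]
  have hba : 0 < b - a := hδ.trans_le hδab
  have hθ : δ / (b - a) ∈ Icc (0 : ℝ) 1 := ⟨by positivity, (div_le_one hba).2 hδab⟩
  have hθ_mul : δ / (b - a) * (b - a) = δ := div_mul_cancel₀ δ hba.ne'
  have ha : a ∈ Icc a b := left_mem_Icc.2 (sub_pos.1 hba).le
  have hb : b ∈ Icc a b := right_mem_Icc.2 (sub_pos.1 hba).le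
  rcases le_total x p with hxp | hpx
  · refine concaveOn_mul_le_of_mem_segment hf ha hp (hnonneg a ha) (hnonneg p hp) hθ
      (Icc_subset_segment ⟨?_, hxp⟩)
    calc (1 - δ / (b - a)) • a + (δ / (b - a)) • p
        = a + δ / (b - a) * (p - a) := by simp only [smul_eq_mul]; ring
      _ ≤ a + δ / (b - a) * (b - a) := by gcongr; exact hp.2
      _ = a + δ := by rw [hθ_mul]
      _ ≤ x := hx.1
  · refine concaveOn_mul_le_of_mem_segment hf hb hp (hnonneg b hb) (hnonneg p hp) hθ ?_
    rw [segment_symm]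
    refine Icc_subset_segment ⟨hpx, ?_⟩
    calc x ≤ b - δ := hx.2
      _ = b - δ / (b - a) * (b - a) := by rw [hθ_mul]
      _ ≤ b - δ / (b - a) * (b - p) := by gcongr; exact hp.1
      _ = (1 - δ / (b - a)) • b + (δ / (b - a)) • p := by simp only [smul_eq_mul]; ring

theorem concaveOn_Icc_deriv_sub_deriv_le (hf : ConcaveOn ℝ (Icc a b) f)
    (hdiff_left : DifferentiableAt ℝ f (a + δ)) (hdiff_right : DifferentiableAt ℝ f (b - δ))
    (hnonneg : ∀ t ∈ Icc a b, 0 ≤ f t) {M : ℝ} (hM : ∀ t ∈ Icc a b, f t ≤ M)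
    (hδ : 0 < δ) (hδab : a + δ ≤ b - δ) :
    deriv f (a + δ) - deriv f (b - δ) ≤ 2 * M / δ := by
  have ha : a ∈ Icc a b := ⟨le_rfl, by linarith⟩
  have haδ : a + δ ∈ Icc a b := ⟨by linarith, by linarith⟩
  have hbδ : b - δ ∈ Icc a b := ⟨by linarith, by linarith⟩
  have hb : b ∈ Icc a b := ⟨by linarith, le_rfl⟩
  have hleft : deriv f (a + δ) ≤ M / δ := calc
    deriv f (a + δ) ≤ slope f a (a + δ) := hf.deriv_le_slope ha haδ (by linarith) hdiff_left
    _ = (f (a + δ) - f a) / δ := by rw [slope_def_field, add_sub_cancel_left]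
    _ ≤ M / δ := by gcongr; linarith [hnonneg a ha, hM _ haδ]
  have hright : -deriv f (b - δ) ≤ M / δ := calc
    -deriv f (b - δ) ≤ -slope f (b - δ) b :=
      neg_le_neg (hf.slope_le_deriv hbδ hb (by linarith) hdiff_right)
    _ = (f (b - δ) - f b) / δ := by rw [slope_def_field, sub_sub_cancel, ← neg_div, neg_sub]
    _ ≤ M / δ := by gcongr; linarith [hnonneg b hb, hM _ hbδ]
  calc deriv f (a + δ) - deriv f (b - δ) ≤ M / δ + M / δ := by linarith
    _ = 2 * M / δ := by ring

end ConcaveOnIcc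

namespace IsSol

variable {F : ℝ → ℝ → ℝ} {u : ℝ → ℝ} {a b : ℝ}

theorem differentiable (hu : IsSol F u) : Differentiable ℝ u := by
  obtain ⟨u', hderiv, -, -⟩ := hu
  exact fun t => (hderiv t).differentiableAt

theorem intervalIntegrable (hu : IsSol F u) (s t : ℝ) :
    IntervalIntegrable (fun x => F x (u x)) volume s t := by
  obtain ⟨-, -, hF_int, -⟩ := hu
  exact intervalIntegrable_of_locallyIntegrable hF_int s t

theorem integral_eq_deriv_sub_deriv (hu : IsSol F u) (s t : ℝ) :
    ∫ x in s..t, F x (u x) = deriv u s - deriv u t := by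
  have hF_int := hu.intervalIntegrable
  obtain ⟨u', hderiv, -, hu'⟩ := hu
  rw [(hderiv s).deriv, (hderiv t).deriv, hu' s, hu' t,
    ← intervalIntegral.integral_interval_sub_left (hF_int 0 t) (hF_int 0 s)]
  ring

theorem neg (hu : IsSol F u) : IsSol (fun t x => -F t (-x)) (-u) := by
  obtain ⟨u', hderiv, hF_int, hu'⟩ := hu
  refine ⟨-u', fun t => (hderiv t).neg, ?_, fun t => ?_⟩
  · simp only [Pi.neg_apply, neg_neg]
    exact hF_int.neg
  · simp only [Pi.neg_apply, neg_neg, intervalIntegral.integral_neg, hu' t]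
    ring

theorem comp_add_const (hu : IsSol F u) (c : ℝ) :
    IsSol (fun t => F (t + c)) (fun t => u (t + c)) := by
  have hintegral := hu.integral_eq_deriv_sub_deriv
  obtain ⟨u', hderiv, hF_int, -⟩ := hu
  refine ⟨fun t => u' (t + c), fun t => (hderiv (t + c)).comp_add_const t c, ?_, fun t => ?_⟩
  · refine (locallyIntegrable_map_homeomorph (Homeomorph.addRight c)
      (f := fun s => F s (u s)) (μ := volume)).1 ?_
    rwa [Homeomorph.coe_addRight, map_add_right_eq_self]
  · rw [intervalIntegral.integral_comp_add_right (fun s => F s (u s)), hintegral,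
      (hderiv (0 + c)).deriv, (hderiv (t + c)).deriv, sub_sub_cancel]

theorem concaveOn (hu : IsSol F u) (hF : ∀ᵐ t ∂volume.restrict (Icc a b), 0 ≤ F t (u t)) :
    ConcaveOn ℝ (Icc a b) u := by
  have hanti : AntitoneOn (deriv u) (Icc a b) := fun s hs t ht hst => by
    rw [← sub_nonneg, ← hu.integral_eq_deriv_sub_deriv]
    exact intervalIntegral.integral_nonneg_of_ae_restrict hst
      (ae_restrict_of_ae_restrict_of_subset (Icc_subset_Icc hs.1 ht.2) hF)
  exact (hanti.mono interior_subset).concaveOn_of_deriv (convex_Icc a b)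
    hu.differentiable.continuous.continuousOn hu.differentiable.differentiableOn

theorem convexOn (hu : IsSol F u) (hF : ∀ᵐ t ∂volume.restrict (Icc a b), F t (u t) ≤ 0) :
    ConvexOn ℝ (Icc a b) u :=
  neg_concaveOn_iff.1 (hu.neg.concaveOn (hF.mono fun t ht => by simpa using ht))

theorem integral_le_two_mul_div (hu : IsSol F u)
    (hF : ∀ᵐ t ∂volume.restrict (Icc a b), 0 ≤ F t (u t)) (hnonneg : ∀ t ∈ Icc a b, 0 ≤ u t)
    {M : ℝ} (hM : ∀ t ∈ Icc a b, u t ≤ M) {δ : ℝ} (hδ : 0 < δ) (hδab : a + δ ≤ b - δ) :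
    ∫ t in (a + δ)..(b - δ), F t (u t) ≤ 2 * M / δ := by
  rw [hu.integral_eq_deriv_sub_deriv]
  exact concaveOn_Icc_deriv_sub_deriv_le (hu.concaveOn hF) (hu.differentiable _)
    (hu.differentiable _) hnonneg hM hδ hδab

theorem mul_integral_le_integral (hu : IsSol F u) {q g : ℝ → ℝ}
    (hqloc : LocallyIntegrable q volume) (hq : ∀ᵐ t ∂volume.restrict (Icc a b), 0 ≤ q t)
    (hF : ∀ᵐ t ∂volume.restrict (Icc a b), q t * g (u t) ≤ F t (u t)) {c : ℝ}
    (hc : ∀ t ∈ Icc a b, c ≤ g (u t)) (hab : a ≤ b) :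
    c * ∫ t in a..b, q t ≤ ∫ t in a..b, F t (u t) := by
  rw [← intervalIntegral.integral_const_mul]
  refine intervalIntegral.integral_mono_ae_restrict hab
    ((intervalIntegrable_of_locallyIntegrable hqloc a b).const_mul c) (hu.intervalIntegrable a b) ?_
  filter_upwards [hq, hF, ae_restrict_mem measurableSet_Icc] with t hqt hFt ht
  calc c * q t ≤ g (u t) * q t := mul_le_mul_of_nonneg_right (hc t ht) hqt
    _ = q t * g (u t) := mul_comm _ _
    _ ≤ F t (u t) := hFt

theorem div_mul_lt_of_superlinear (hu : IsSol F u) (hnonneg : ∀ t ∈ Icc a b, 0 ≤ u t)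
    {q g : ℝ → ℝ} (hqloc : LocallyIntegrable q volume)
    (hq : ∀ᵐ t ∂volume.restrict (Icc a b), 0 ≤ q t) (hg : ∀ s, 0 ≤ s → 0 ≤ g s)
    (hF : ∀ᵐ t ∂volume.restrict (Icc a b), q t * g (u t) ≤ F t (u t))
    {δ K N : ℝ} (hδ : 0 < δ) (hδab : a + δ ≤ b - δ) (hK : 0 ≤ K) (hN : 0 < N)
    (hgK : ∀ s ≥ N, K * s ≤ g s)
    (hlarge : 2 / δ < K * (δ / (b - a)) * ∫ t in (a + δ)..(b - δ), q t) :
    ∀ t ∈ Icc a b, δ / (b - a) * u t < N := by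
  intro t ht
  by_contra! hNt
  obtain ⟨p, hp, hmax⟩ :=
    isCompact_Icc.exists_isMaxOn ⟨t, ht⟩ hu.differentiable.continuous.continuousOn
  have hba : 0 < b - a := by linarith
  have hNp : N ≤ δ / (b - a) * u p := hNt.trans (by gcongr; exact hmax ht)
  have hup : 0 < u p := pos_of_mul_pos_right (hN.trans_le hNp) (by positivity)
  have hF_nonneg : ∀ᵐ t ∂volume.restrict (Icc a b), 0 ≤ F t (u t) := by
    filter_upwards [hq, hF, ae_restrict_mem measurableSet_Icc] with s hqs hFs hs
    exact (mul_nonneg hqs (hg _ (hnonneg s hs))).trans hFs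
  have hg_lower : ∀ s ∈ Icc (a + δ) (b - δ), K * (δ / (b - a) * u p) ≤ g (u s) := fun s hs => by
    have hus := concaveOn_Icc_mul_le (hu.concaveOn hF_nonneg) hnonneg hδ hp hs
    exact (mul_le_mul_of_nonneg_left hus hK).trans (hgK _ (hNp.trans hus))
  have hsubset : Icc (a + δ) (b - δ) ⊆ Icc a b := Icc_subset_Icc (by linarith) (by linarith)
  refine lt_irrefl (2 * u p / δ) ?_
  calc 2 * u p / δ = u p * (2 / δ) := by ring
    _ < u p * (K * (δ / (b - a)) * ∫ s in (a + δ)..(b - δ), q s) := by gcongr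
    _ = K * (δ / (b - a) * u p) * ∫ s in (a + δ)..(b - δ), q s := by ring
    _ ≤ ∫ s in (a + δ)..(b - δ), F s (u s) :=
      hu.mul_integral_le_integral hqloc (ae_restrict_of_ae_restrict_of_subset hsubset hq)
        (ae_restrict_of_ae_restrict_of_subset hsubset hF) hg_lower hδab
    _ ≤ 2 * u p / δ := hu.integral_le_two_mul_div hF_nonneg hnonneg (fun _ hs => hmax hs) hδ hδab

theorem lt_of_ae_nonpos (hu : IsSol F u)
    (hF : ∀ᵐ t ∂volume.restrict (Icc a b), F t (u t) ≤ 0) {R : ℝ} (ha : u a < R) (hb : u b < R)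
    {t : ℝ} (ht : t ∈ Icc a b) : u t < R := by
  have hab : a ≤ b := ht.1.trans ht.2
  exact ((hu.convexOn hF).le_max_of_mem_Icc (left_mem_Icc.2 hab) (right_mem_Icc.2 hab) ht).trans_lt
    (max_lt ha hb)

theorem lt_of_forall_lt_on_even_Icc (hu : IsSol F u) {m : ℕ} {σ : ℕ → ℝ}
    (hσ : ∀ i < m, σ (2 * i) ≤ σ (2 * i + 1))
    (hF : ∀ i < m, ∀ᵐ t ∂volume.restrict (Icc (σ (2 * i + 1)) (σ (2 * i + 2))), F t (u t) ≤ 0)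
    {R : ℝ} (hpos : ∀ i < m, ∀ t ∈ Icc (σ (2 * i)) (σ (2 * i + 1)), u t < R)
    (hlast : u (σ (2 * m)) < R) {t : ℝ} (ht : t ∈ Ico (σ 0) (σ (2 * m))) : u t < R := by
  obtain ⟨j, hj, hjt⟩ : ∃ j < 2 * m, t ∈ Ico (σ j) (σ (j + 1)) := by
    simpa only [mem_iUnion, Finset.mem_range, exists_prop] using
      Ico_subset_biUnion_Ico (2 * m) σ ht
  obtain ⟨i, rfl | rfl⟩ := j.even_or_odd'
  · exact hpos i (by lia) t (Ico_subset_Icc_self hjt)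
  · refine hu.lt_of_ae_nonpos (hF i (by lia)) ?_ ?_ (Ico_subset_Icc_self hjt)
    · exact hpos i (by lia) _ (right_mem_Icc.2 (hσ i (by lia)))
    · rcases (show i + 1 ≤ m by lia).eq_or_lt with rfl | hi
      · exact hlast
      · exact hpos (i + 1) hi _ (left_mem_Icc.2 (hσ (i + 1) hi))

end IsSol

theorem eventually_forall_isSol_lt_of_posOn {q g : ℝ → ℝ} {a b : ℝ} (hab : a < b)
    (hqloc : LocallyIntegrable q volume) (hpos : PosOn q (Icc a b))
    (hg : ∀ s, 0 ≤ s → 0 ≤ g s) (hgsup : Tendsto (fun s => g s / s) atTop atTop) :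
    ∀ᶠ R in atTop, ∀ F u, IsSol F u → (∀ t ∈ Icc a b, 0 ≤ u t) →
      (∀ᵐ t ∂volume.restrict (Icc a b), q t * g (u t) ≤ F t (u t)) →
      ∀ t ∈ Icc a b, u t < R := by
  obtain ⟨δ, hδ, hδab, hQ⟩ := hpos.exists_intervalIntegral_shrink_pos hqloc hab
  have hθ : 0 < δ / (b - a) := div_pos hδ (sub_pos.2 hab)
  have hKlim : Tendsto (fun K => K * (δ / (b - a)) * ∫ t in (a + δ)..(b - δ), q t) atTop atTop :=
    (tendsto_id.atTop_mul_const hθ).atTop_mul_const hQ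
  obtain ⟨K, hK, hlarge⟩ :=
    ((eventually_ge_atTop 0).and (hKlim.eventually_gt_atTop (2 / δ))).exists
  obtain ⟨N, hN, hgK⟩ := exists_pos_forall_mul_le_of_tendsto_div hgsup K
  filter_upwards [eventually_ge_atTop (N / (δ / (b - a)))] with R hR F u hu hnonneg hF t ht
  refine ((lt_div_iff₀' hθ).2 ?_).trans_le hR
  exact hu.div_mul_lt_of_superlinear hnonneg hqloc hpos.1 hg hF hδ hδab.le hK hN hgK hlarge t ht

/-- The `T`-periodic extension of `I⁺_1 ∪ … ∪ I⁺_m`, the support of the forcing term. Here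
`I⁺_(i+1) = [σ(2i), σ(2i+1)] ⊆ [0, T]`, and points are reduced to `[0, T)` by the floor function. -/
def positivitySet (T : ℝ) (m : ℕ) (σ : ℕ → ℝ) : Set ℝ :=
  {t : ℝ | ∃ i < m, t - T * ((⌊t / T⌋ : ℤ) : ℝ) ∈ Icc (σ (2 * i)) (σ (2 * i + 1))}

/-- The forcing term `ν 𝟙(t)`, where `𝟙` is the indicator function of `positivitySet T m σ`. -/
noncomputable def positivityForcing (T : ℝ) (m : ℕ) (σ : ℕ → ℝ) (ν t : ℝ) : ℝ :=
  ν * (positivitySet T m σ).indicator (fun _ => 1) t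

section PositivitySet

variable {T : ℝ} {m : ℕ} {σ : ℕ → ℝ}

theorem add_period_mem_positivitySet_iff (hT : T ≠ 0) (t : ℝ) :
    t + T ∈ positivitySet T m σ ↔ t ∈ positivitySet T m σ := by
  have hreduce : t + T - T * ((⌊(t + T) / T⌋ : ℤ) : ℝ) = t - T * ((⌊t / T⌋ : ℤ) : ℝ) := by
    rw [add_div, div_self hT, Int.floor_add_one]
    push_cast
    ring
  simp only [positivitySet, mem_ofPred_eq, hreduce]

theorem periodic_positivityForcing (hT : T ≠ 0) (ν : ℝ) :
    Function.Periodic (positivityForcing T m σ ν) T := fun t => by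
  classical simp only [positivityForcing, indicator_apply, add_period_mem_positivitySet_iff hT]

theorem positivityForcing_nonneg {ν : ℝ} (hν : 0 ≤ ν) (t : ℝ) : 0 ≤ positivityForcing T m σ ν t :=
  mul_nonneg hν (indicator_nonneg (fun _ _ => zero_le_one) t)

theorem notMem_positivitySet_of_mem_Ioo (hT : 0 < T) (hσ0 : σ 0 = 0) (hσT : σ (2 * m) = T)
    (hσ : ∀ i < 2 * m, σ i < σ (i + 1)) {i : ℕ} (hi : i < m) {t : ℝ}
    (ht : t ∈ Ioo (σ (2 * i + 1)) (σ (2 * i + 2))) : t ∉ positivitySet T m σ := by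
  have hmono : MonotoneOn σ (Iic (2 * m)) :=
    (strictMonoOn_of_lt_add_one ordConnected_Iic fun j _ _ hj =>
      hσ j (Nat.add_one_le_iff.1 hj)).monotoneOn
  have hle {j k : ℕ} (hjk : j ≤ k) (hk : k ≤ 2 * m) : σ j ≤ σ k := hmono (hjk.trans hk) hk hjk
  have ht0 : 0 ≤ t := hσ0.symm.trans_le ((hle (Nat.zero_le _) (by lia)).trans ht.1.le)
  have htT : t < T := ht.2.trans_le ((hle (by lia) le_rfl).trans_eq hσT)
  have hfloor : ⌊t / T⌋ = 0 := Int.floor_eq_zero_iff.2 ⟨by positivity, (div_lt_one hT).2 htT⟩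
  rintro ⟨l, hl, hmem⟩
  rw [hfloor, Int.cast_zero, mul_zero, sub_zero] at hmem
  rcases le_or_gt l i with hli | hil
  · exact (hmem.2.trans (hle (by lia) (by lia))).not_gt ht.1
  · exact ((hle (by lia) (by lia)).trans hmem.1).not_gt ht.2

theorem ae_positivityForcing_eq_zero (hT : 0 < T) (hσ0 : σ 0 = 0) (hσT : σ (2 * m) = T)
    (hσ : ∀ i < 2 * m, σ i < σ (i + 1)) {i : ℕ} (hi : i < m) (ν : ℝ) :
    ∀ᵐ t ∂volume.restrict (Icc (σ (2 * i + 1)) (σ (2 * i + 2))),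
      positivityForcing T m σ ν t = 0 := by
  rw [← Measure.restrict_congr_set Ioo_ae_eq_Icc]
  filter_upwards [ae_restrict_mem measurableSet_Ioo] with t ht
  have htA : t ∉ positivitySet T m σ := notMem_positivitySet_of_mem_Ioo hT hσ0 hσT hσ hi ht
  rw [positivityForcing, indicator_of_notMem htA, mul_zero]

end PositivitySet

theorem stmt10_general {T : ℝ} (hT : 0 < T) {q : ℝ → ℝ} (hqper : Function.Periodic q T)
    (hqloc : LocallyIntegrable q volume) {m : ℕ} {σ : ℕ → ℝ} (hσT : σ (2 * m) = σ 0 + T)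
    (hσ : ∀ i < 2 * m, σ i < σ (i + 1))
    (hqpos : ∀ i < m, PosOn q (Icc (σ (2 * i)) (σ (2 * i + 1))))
    (hqneg : ∀ i < m, ∀ᵐ t ∂volume.restrict (Icc (σ (2 * i + 1)) (σ (2 * i + 2))), q t ≤ 0)
    {g : ℝ → ℝ} (hg : ∀ s, 0 ≤ s → 0 ≤ g s) (hgsup : Tendsto (fun s => g s / s) atTop atTop) :
    ∃ R > 0, ∀ h : ℝ → ℝ, Function.Periodic h T →
      (∀ i < m, ∀ᵐ t ∂volume.restrict (Icc (σ (2 * i)) (σ (2 * i + 1))), 0 ≤ h t) →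
      (∀ i < m, ∀ᵐ t ∂volume.restrict (Icc (σ (2 * i + 1)) (σ (2 * i + 2))), h t ≤ 0) →
      ∀ u, IsSol (fun t s => q t * g s + h t) u → (∀ t, 0 ≤ u t) → ∀ t, u t < R := by
  have hσ_even : ∀ i < m, σ (2 * i) < σ (2 * i + 1) := fun i hi => hσ (2 * i) (by lia)
  obtain ⟨R, hR, hbound⟩ := ((eventually_gt_atTop 0).and
    ((eventually_all_finite (finite_lt_nat m)).2 fun i hi => eventually_forall_isSol_lt_of_posOn
      (hσ_even i hi) hqloc (hqpos i hi) hg hgsup)).exists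
  refine ⟨R, hR, fun h hper hh_pos hh_neg u hu hnonneg t => ?_⟩
  have htranslate (n : ℤ) : IsSol (fun t s => q t * g s + h t) (fun t => u (t + n * T)) := by
    simpa only [hqper.int_mul n _, hper.int_mul n _] using hu.comp_add_const (n * T)
  have hpos (n : ℤ) : ∀ i < m, ∀ s ∈ Icc (σ (2 * i)) (σ (2 * i + 1)), u (s + n * T) < R :=
    fun i hi => hbound i hi _ _ (htranslate n) (fun s _ => hnonneg _)
      ((hh_pos i hi).mono fun s hs => le_add_of_nonneg_right hs)
  have hm : 0 < m := Nat.pos_of_ne_zero fun hm => by simp [hm, hT.ne'] at hσT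
  have hperiod (n : ℤ) : ∀ s ∈ Ico (σ 0) (σ (2 * m)), u (s + n * T) < R := by
    refine fun s => (htranslate n).lt_of_forall_lt_on_even_Icc (fun i hi => (hσ_even i hi).le)
      (fun i hi => ?_) (hpos n) ?_
    · filter_upwards [hqneg i hi, hh_neg i hi] with s hqs hhs
      exact add_nonpos (mul_nonpos_of_nonpos_of_nonneg hqs (hg _ (hnonneg _))) hhs
    · have hnext := hpos (n + 1) 0 hm (σ 0) (left_mem_Icc.2 (hσ_even 0 hm).le)
      convert hnext using 2
      rw [hσT]; push_cast; ring
  obtain ⟨n, hn, -⟩ := existsUnique_sub_zsmul_mem_Ico hT t (σ 0)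
  have htn : t - n • T + n * T = t := by rw [zsmul_eq_mul, sub_add_cancel]
  exact htn ▸ hperiod n _ (hσT ▸ hn)

/-- a priori bound: there is `R > 0` such that every nonnegative
`kT`-periodic solution of `u'' + q(t) g(u) + ν 𝟙(t) = 0` (with `𝟙` the `T`-periodic
extension of the indicator of `I⁺_1 ∪ … ∪ I⁺_m`, `I⁺_i = [σ(2i), σ(2i+1)]`) stays below
`R`, uniformly in `ν ≥ 0` and `k ≥ 1`. -/
theorem stmt10 (T : ℝ) (hT : 0 < T) (q : ℝ → ℝ)
    (hqper : Function.Periodic q T)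
    (hqloc : MeasureTheory.LocallyIntegrable q MeasureTheory.volume)
    (hqmean : (∫ t in (0:ℝ)..T, q t) < 0)
    (m : ℕ) (hm : 1 ≤ m) (σ : ℕ → ℝ)
    (hσ0 : σ 0 = 0) (hσT : σ (2*m) = T) (hσmono : ∀ i < 2*m, σ i < σ (i+1))
    (hqpos : ∀ i < m, PosOn q (Set.Icc (σ (2*i)) (σ (2*i+1))))
    (hqneg : ∀ i < m, PosOn (fun t => - q t) (Set.Icc (σ (2*i+1)) (σ (2*i+2))))
    (g : ℝ → ℝ) (hgC1 : ContDiffOn ℝ 1 g (Set.Ici 0))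
    (hg0 : g 0 = 0) (hgpos : ∀ s : ℝ, 0 < s → 0 < g s)
    (hg'0 : derivWithin g (Set.Ici 0) 0 = 0)
    (hgsup : Filter.Tendsto (fun s => g s / s) Filter.atTop Filter.atTop) :
    ∃ R : ℝ, 0 < R ∧ ∀ ν : ℝ, 0 ≤ ν → ∀ k : ℕ, 1 ≤ k → ∀ u : ℝ → ℝ,
      IsSol (fun t s => q t * g s +
        ν * Set.indicator
              {t : ℝ | ∃ i < m, t - T * ((⌊t / T⌋ : ℤ) : ℝ) ∈
                Set.Icc (σ (2*i)) (σ (2*i+1))}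
              (fun _ => (1:ℝ)) t) u →
      (∀ t, 0 ≤ u t) → Function.Periodic u ((k:ℝ) * T) →
      ∀ t, u t < R := by
  obtain ⟨R, hR, hbound⟩ := stmt10_general hT hqper hqloc (by rw [hσT, hσ0, zero_add]) hσmono hqpos
    (fun i hi => (hqneg i hi).1.mono fun t ht => neg_nonneg.1 ht)
    (fun s hs => hs.eq_or_lt.elim (fun h => h ▸ hg0.ge) fun h => (hgpos s h).le) hgsup
  exact ⟨R, hR, fun ν hν k _ u hu hnonneg _ => hbound (positivityForcing T m σ ν)
    (periodic_positivityForcing hT.ne' ν) (fun _ _ => ae_of_all _ (positivityForcing_nonneg hν))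
    (fun i hi => (ae_positivityForcing_eq_zero hT hσ0 hσT hσmono hi ν).mono fun _ => le_of_eq)
    u hu hnonneg⟩
end

section
/- Let X and Z be real Banach spaces, let dom L be a linear subspace of X, and let L : dom L → Z be a linear map. Let P : X → X be a continuous linear projection (P ∘ P = P) whose range equals ker L, let Q : Z → Z be a continuous linear projection whose kernel equals the image of L, let K_P : Im L → X be a linear map taking values in dom L ∩ ker P such that L(K_P w) = w for every w ∈ Im L and K_P(L u) = u − P u for every u ∈ dom L, and let J : Im Q → ker L be an injective linear map. Then for any map N : X → Z and any u ∈ X, the following are equivalent: (i) u ∈ dom L and L u = N u; (ii) u = P u + J(Q(N u)) + K_P((Id − Q)(N u)). -/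
/-!
Applying `P` to the fixed point equation kills `K_P` and fixes `ker L`, so the `ker L`-component
`J Q N u` vanishes and what remains is `u = P u + K_P (Id - Q) N u`. Since `K_P L v = v - P v` on
`dom L`, this says `L u = (Id - Q) N u`. As `J` is injective, `J Q N u = 0` means `Q N u = 0`, and
the two conditions together amount to `L u = N u` because `Q` vanishes on `Im L`.
-/

section

variable {R X Z : Type*} [Ring R] [AddCommGroup X] [Module R X] [AddCommGroup Z] [Module R Z]
  {domL : Submodule R X} {L : domL →ₗ[R] Z} {P : X →ₗ[R] X} {K : LinearMap.range L → domL}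

theorem eq_iff_map_eq_zero_and_eq_sub_map {G : Type*} [AddGroup G] {Q : G → G} {y z : G}
    (hy : Q y = 0) : y = z ↔ Q z = 0 ∧ y = z - Q z := by
  constructor
  · rintro rfl
    exact ⟨hy, by rw [hy, sub_zero]⟩
  · rintro ⟨hz, h⟩
    rwa [hz, sub_zero] at h

theorem coe_rightInverse_rangeRestrict_eq_sub_proj
    (hP : LinearMap.IsProj ((LinearMap.ker L).map domL.subtype) P)
    (hK : Function.RightInverse K L.rangeRestrict) (hPK : ∀ w, P (K w) = 0) (v : domL) :
    (K (L.rangeRestrict v) : X) = v - P v := by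
  obtain ⟨p, hLp, hp⟩ := hP.map_mem (v : X)
  change (p : X) = P v at hp
  have hLK : L (K (L.rangeRestrict v)) = L v := congrArg Subtype.val (hK (L.rangeRestrict v))
  have hker : v - p - K (L.rangeRestrict v) ∈ LinearMap.ker L := by
    rw [LinearMap.mem_ker, map_sub, map_sub, LinearMap.mem_ker.1 hLp, hLK, sub_zero, sub_self]
  have hfix : P (v - P v - K (L.rangeRestrict v)) = v - P v - K (L.rangeRestrict v) :=
    hP.map_id _ ⟨_, hker, by simp [hp]⟩
  have hkill : P (v - P v - K (L.rangeRestrict v)) = 0 := by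
    rw [map_sub, map_sub, hP.map_id _ (hP.map_mem _), hPK, sub_zero, sub_self]
  exact (sub_eq_zero.1 (hfix.symm.trans hkill)).symm

theorem eq_proj_add_ker_add_rightInverse_iff
    (hP : LinearMap.IsProj ((LinearMap.ker L).map domL.subtype) P)
    (hK : Function.RightInverse K L.rangeRestrict) (hPK : ∀ w, P (K w) = 0)
    (u : X) (k : LinearMap.ker L) (w : LinearMap.range L) :
    u = P u + (k : domL) + K w ↔ k = 0 ∧ ∃ h : u ∈ domL, L ⟨u, h⟩ = w := by
  constructor
  · intro hu
    have hPk : P (k : domL) = (k : domL) := hP.map_id _ ⟨k, k.2, rfl⟩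
    have hPu : P u = P u + (k : domL) := by
      simpa only [map_add, hP.map_id _ (hP.map_mem u), hPk, hPK, add_zero] using congrArg P hu
    have hk : k = 0 := Subtype.ext (Subtype.ext (left_eq_add.1 hPu))
    obtain ⟨p, hLp, hp⟩ := hP.map_mem u
    have hup : ((p + K w : domL) : X) = u := by
      simpa [hk, ← hp] using hu.symm
    refine ⟨hk, hup ▸ (p + K w).2, ?_⟩
    calc L ⟨u, _⟩ = L (p + K w) := congrArg L (Subtype.ext hup.symm)
      _ = L (K w) := by rw [map_add, LinearMap.mem_ker.1 hLp, zero_add]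
      _ = w := congrArg Subtype.val (hK w)
  · rintro ⟨rfl, h, hLu⟩
    obtain rfl : L.rangeRestrict ⟨u, h⟩ = w := Subtype.ext hLu
    simp [coe_rightInverse_rangeRestrict_eq_sub_proj hP hK hPK]

theorem stmt14_general (hP : LinearMap.IsProj ((LinearMap.ker L).map domL.subtype) P)
    (hK : Function.RightInverse K L.rangeRestrict) (hPK : ∀ w, P (K w) = 0)
    {Q : Z →ₗ[R] Z} (hQ : LinearMap.range L ≤ LinearMap.ker Q)
    {J : LinearMap.range Q →ₗ[R] LinearMap.ker L} (hJ : Function.Injective J)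
    (N : X → Z) (u : X) :
    (∃ h : u ∈ domL, L ⟨u, h⟩ = N u) ↔
      ∃ h : N u - Q (N u) ∈ LinearMap.range L,
        u = P u + (J ⟨Q (N u), LinearMap.mem_range_self Q (N u)⟩ : domL)
          + K ⟨N u - Q (N u), h⟩ := by
  have hJQ : J ⟨Q (N u), LinearMap.mem_range_self Q (N u)⟩ = 0 ↔ Q (N u) = 0 := by
    rw [map_eq_zero_iff J hJ, Submodule.mk_eq_zero]
  have hL (v : domL) : L v = N u ↔ Q (N u) = 0 ∧ L v = N u - Q (N u) :=
    eq_iff_map_eq_zero_and_eq_sub_map (hQ (LinearMap.mem_range_self L v))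
  simp only [eq_proj_add_ker_add_rightInverse_iff hP hK hPK, hJQ, hL]
  constructor
  · rintro ⟨h, hQu, hLu⟩
    exact ⟨⟨_, hLu⟩, hQu, h, hLu⟩
  · rintro ⟨-, hQu, h, hLu⟩
    exact ⟨h, hQu, hLu⟩

end

/-- the coincidence equation `Lu = Nu` is equivalent to the fixed point
equation `u = Pu + J Q N u + K_P (Id - Q) N u` of Mawhin's coincidence degree theory. -/
theorem stmt14 (X Z : Type*)
    [NormedAddCommGroup X] [NormedSpace ℝ X] [CompleteSpace X]
    [NormedAddCommGroup Z] [NormedSpace ℝ Z] [CompleteSpace Z]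
    (domL : Submodule ℝ X) (L : domL →ₗ[ℝ] Z)
    (P : X →L[ℝ] X) (hPproj : ∀ x, P (P x) = P x)
    (hPrange : LinearMap.range (P : X →ₗ[ℝ] X) = (LinearMap.ker L).map domL.subtype)
    (Q : Z →L[ℝ] Z) (hQproj : ∀ z, Q (Q z) = Q z)
    (hQker : LinearMap.ker (Q : Z →ₗ[ℝ] Z) = LinearMap.range L)
    (KP : LinearMap.range L →ₗ[ℝ] X)
    (hKPmem : ∀ w, KP w ∈ domL) (hKPkerP : ∀ w, P (KP w) = 0)
    (hKPright : ∀ w : LinearMap.range L, L ⟨KP w, hKPmem w⟩ = (w : Z))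
    (hKPleft : ∀ u : domL, KP ⟨L u, LinearMap.mem_range_self L u⟩ = (u : X) - P (u : X))
    (J : LinearMap.range (Q : Z →ₗ[ℝ] Z) →ₗ[ℝ] LinearMap.ker L)
    (hJinj : Function.Injective J)
    (N : X → Z) (u : X) :
    (∃ h : u ∈ domL, L ⟨u, h⟩ = N u) ↔
      ∃ h2 : N u - Q (N u) ∈ LinearMap.range L,
        u = P u
          + ((((J ⟨Q (N u), LinearMap.mem_range_self (Q : Z →ₗ[ℝ] Z) (N u)⟩ :
                LinearMap.ker L) : domL) : X))
          + KP ⟨N u - Q (N u), h2⟩ := by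
  have hP : LinearMap.IsProj ((LinearMap.ker L).map domL.subtype) (P : X →ₗ[ℝ] X) :=
    hPrange ▸ LinearMap.IsIdempotentElem.isProj_range _ (LinearMap.ext hPproj)
  exact stmt14_general (K := fun w ↦ ⟨KP w, hKPmem w⟩) hP (fun w ↦ Subtype.ext (hKPright w))
    hKPkerP hQker.ge hJinj N u
end
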